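/- For all nonnegative integers m and n, the odd q-super Catalan number C_{m,n}(q) = [2m+1]! [2n]! / ([m+n+1]! [m]! [n]!) is a polynomial in q with nonnegative integer coefficients. -/

import Mathlib

open Finset

noncomputable section

/-- The variable `q`, as a rational function over `ℚ`. -/
def q : RatFunc ℚ := RatFunc.X

/-- The `q`-integer `[n] = (1 - q^n)/(1 - q)`. -/
def qint (n : ℕ) : RatFunc ℚ := (1 - q ^ n) / (1 - q)

/-- The `q`-factorial `[n]! = [1][2]⋯[n]`, with `[0]! = 1`. -/
def qfact (n : ℕ) : RatFunc ℚ := ∏ i ∈ Finset.range n, qint (i + 1)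

/-- The odd `q`-super Catalan number
`C_{m,n}(q) = [2m+1]! [2n]! / ([m+n+1]! [m]! [n]!)`. -/
def oddCatalan (m n : ℕ) : RatFunc ℚ :=
  qfact (2 * m + 1) * qfact (2 * n) / (qfact (m + n + 1) * qfact m * qfact n)

/-- A rational function lies in `ℕ[q]` if it equals a polynomial in `q`
with nonnegative integer coefficients. -/
def IsNonnegPoly (f : RatFunc ℚ) : Prop :=
  ∃ p : Polynomial ℕ, f = algebraMap (Polynomial ℚ) (RatFunc ℚ) (p.map (Nat.castRingHom ℚ))

open RingTheory.Sequence CategoryTheory Abelian Limits Pointwise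

section Grade
universe u
variable {A : Type u} [CommRing A]

/-- There is an `M`-regular sequence of length `n` inside the ideal `I`. -/
def HasGrade (I : Ideal A) (M : Type u) [AddCommGroup M] [Module A M] (n : ℕ) : Prop :=
  ∃ rs : List A, rs.length = n ∧ (∀ r ∈ rs, r ∈ I) ∧ IsRegular M rs

variable {M : Type u} [AddCommGroup M] [Module A M]

lemma HasGrade.nontrivial {I : Ideal A} {n : ℕ} (h : HasGrade I M n) : Nontrivial M := by
  obtain ⟨rs, -, -, h⟩ := h
  exact h.nontrivial

lemma HasGrade.of_sup_span {I : Ideal A} {f : A} {n : ℕ}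
    (h : HasGrade (I ⊔ Ideal.span {f}) M n) (hf : ∀ x : M, f • x = 0) : HasGrade I M n := by
  obtain ⟨rs, rfl, hmem, hreg⟩ := h
  have hsplit : ∀ r ∈ rs, ∃ s ∈ I, ∀ x : M, r • x = s • x := by
    intro r hr
    obtain ⟨s, hs, t, ht, rfl⟩ := Submodule.mem_sup.mp (hmem r hr)
    obtain ⟨c, rfl⟩ := Ideal.mem_span_singleton'.mp ht
    exact ⟨s, hs, fun x => by rw [add_smul, mul_smul, hf, smul_zero, add_zero]⟩
  choose! φ hφ using hsplit
  refine ⟨rs.map φ, by simp, ?_, ?_⟩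
  · intro s hs
    obtain ⟨r, hr, rfl⟩ := List.mem_map.mp hs
    exact (hφ r hr).1
  · refine ((AddEquiv.refl M).isRegular_congr (List.forall₂_iff_get.mpr ⟨by simp, ?_⟩)).mp hreg
    intro i h₁ h₂ x
    simpa using (hφ (rs.get ⟨i, h₁⟩) (List.get_mem _ _)).2 x

lemma smul_top_lt_top [IsLocalRing A] [Module.Finite A M] [Nontrivial M]
    {I : Ideal A}
    (hI : I ≤ IsLocalRing.maximalIdeal A) : I • (⊤ : Submodule A M) < ⊤ := by
  refine lt_top_iff_ne_top.mpr fun h => ?_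
  refine (top_ne_bot (α := Submodule A M)) ?_
  refine Submodule.eq_bot_of_le_smul_of_le_jacobson_bot I ⊤ Module.Finite.fg_top h.ge ?_
  rwa [IsLocalRing.jacobson_eq_maximalIdeal ⊥ bot_ne_top]

lemma exists_ne_zero_forall_smul_eq_zero [IsNoetherianRing A] [Module.Finite A M] {I : Ideal A}
    (h : ∀ g ∈ I, ¬ IsSMulRegular M g) : ∃ u : M, u ≠ 0 ∧ ∀ a ∈ I, a • u = 0 := by
  have hns : ¬ Subsingleton ((A ⧸ I) →ₗ[A] M) := by
    rw [IsSMulRegular.subsingleton_linearMap_iff]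
    rintro ⟨r, hr, hreg⟩
    rw [Ideal.annihilator_quotient] at hr
    exact h r hr hreg
  rw [not_subsingleton_iff_nontrivial] at hns
  obtain ⟨φ, hφ⟩ := exists_ne (0 : (A ⧸ I) →ₗ[A] M)
  refine ⟨φ 1, fun h1 => hφ ?_, fun a ha => ?_⟩
  · refine LinearMap.ext fun x => ?_
    obtain ⟨x, rfl⟩ := Ideal.Quotient.mk_surjective x
    have : (Ideal.Quotient.mk I x) = x • (1 : A ⧸ I) := by
      rw [Algebra.smul_def, mul_one]; rfl
    rw [this, map_smul, h1, smul_zero, LinearMap.zero_apply]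
  · rw [← map_smul, Algebra.smul_def, mul_one]
    have : algebraMap A (A ⧸ I) a = 0 := Ideal.Quotient.eq_zero_iff_mem.mpr ha
    rw [this, map_zero]

variable [IsLocalRing A] [IsNoetherianRing A]

lemma HasGrade.quotSMulTop [Module.Finite A M] {I : Ideal A}
    (hI : I ≤ IsLocalRing.maximalIdeal A) {d : ℕ} (h : HasGrade I M (d + 1)) {g : A} (hg : g ∈ I)
    (hreg : IsSMulRegular M g) : HasGrade I (QuotSMulTop g M) d := by
  have := h.nontrivial
  obtain ⟨rs, hlen, hmem, hrs⟩ := h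
  have hsupp : Module.support A (A ⧸ I) = PrimeSpectrum.zeroLocus I := by
    rw [Module.support_eq_zeroLocus, Ideal.annihilator_quotient]
  have hext := ModuleCat.subsingleton_ext_of_exists_isRegular I (ModuleCat.of A (A ⧸ I))
    hsupp.subset (ModuleCat.of A M) (smul_top_lt_top hI) rs hmem hrs
  have : Nontrivial (QuotSMulTop g M) :=
    nontrivial_quotSMulTop_of_mem_maximalIdeal M (hI hg)
  refine ModuleCat.exists_isRegular_of_exists_subsingleton_ext I d
    (ModuleCat.of A (QuotSMulTop g M)) (smul_top_lt_top hI) (ModuleCat.of A (A ⧸ I)) hsupp ?_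
  intro i hi
  have zero1 := AddCommGrpCat.isZero_of_iff_subsingleton.mpr (hext i (by omega))
  have zero2 := AddCommGrpCat.isZero_of_iff_subsingleton.mpr (hext (i + 1) (by omega))
  have hreg' : IsSMulRegular (ModuleCat.of A M) g := hreg
  exact AddCommGrpCat.subsingleton_of_isZero <| ShortComplex.Exact.isZero_of_both_zeros
    ((Ext.covariant_sequence_exact₃' (ModuleCat.of A (A ⧸ I))
      hreg'.smulShortComplex_shortExact) i (i + 1) rfl)
    (zero1.eq_zero_of_src _) (zero2.eq_zero_of_tgt _)

lemma HasGrade.of_le_radical [Module.Finite A M] {I J : Ideal A}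
    (hI : I ≤ IsLocalRing.maximalIdeal A) (hJ : J ≤ IsLocalRing.maximalIdeal A) {d : ℕ}
    (h : HasGrade J M d) (hJI : J ≤ I.radical) : HasGrade I M d := by
  have := h.nontrivial
  obtain ⟨rs, hlen, hmem, hrs⟩ := h
  have hsupp : Module.support A (A ⧸ I) = PrimeSpectrum.zeroLocus I := by
    rw [Module.support_eq_zeroLocus, Ideal.annihilator_quotient]
  refine ModuleCat.exists_isRegular_of_exists_subsingleton_ext I d
    (ModuleCat.of A M) (smul_top_lt_top hI) (ModuleCat.of A (A ⧸ I)) hsupp ?_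
  rw [← hlen]
  refine ModuleCat.subsingleton_ext_of_exists_isRegular J _ ?_ _ (smul_top_lt_top hJ) rs hmem hrs
  refine hsupp.subset.trans ?_
  rwa [PrimeSpectrum.zeroLocus_subset_zeroLocus_iff]

/-- Dropping one generator lowers the grade of an ideal by at most one. -/
lemma HasGrade.of_sup_span_singleton [Module.Finite A M] {I : Ideal A} {f : A}
    (hI : I ≤ IsLocalRing.maximalIdeal A) (hf : f ∈ IsLocalRing.maximalIdeal A) {d : ℕ}
    (h : HasGrade (I ⊔ Ideal.span {f}) M (d + 1)) : HasGrade I M d := by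
  have hIf : I ⊔ Ideal.span {f} ≤ IsLocalRing.maximalIdeal A :=
    sup_le hI ((Ideal.span_singleton_le_iff_mem _).mpr hf)
  induction d generalizing M with
  | zero =>
    have := h.nontrivial
    exact ⟨[], rfl, by simp, IsRegular.nil A M⟩
  | succ d ih =>
    by_cases hex : ∃ g ∈ I, IsSMulRegular M g
    · obtain ⟨g, hg, hreg⟩ := hex
      obtain ⟨rs, hlen, hmem, hrs⟩ :=
        ih (h.quotSMulTop hIf ((le_sup_left : I ≤ I ⊔ Ideal.span {f}) hg) hreg)
      refine ⟨g :: rs, by simp [hlen], ?_, hrs.cons hreg⟩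
      simpa using ⟨hg, hmem⟩
    · exfalso
      push Not at hex
      obtain ⟨u, hu0, hu⟩ := exists_ne_zero_forall_smul_eq_zero hex
      obtain ⟨rs, hlen, hmem, hrs⟩ := h
      match rs, hlen with
      | g₁ :: g₂ :: rs, _ =>
        rw [isRegular_cons_iff, isRegular_cons_iff] at hrs
        obtain ⟨hg₁, hg₂, -⟩ := hrs
        have hact : ∀ g ∈ I ⊔ Ideal.span {f}, ∃ r : A, ∀ x : M, (∀ a ∈ I, a • x = 0) →
            g • x = r • f • x := by
          intro g hg
          obtain ⟨s, hs, t, ht, rfl⟩ := Submodule.mem_sup.mp hg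
          obtain ⟨c, rfl⟩ := Ideal.mem_span_singleton'.mp ht
          exact ⟨c, fun x hx => by rw [add_smul, hx s hs, zero_add, mul_smul]⟩
        obtain ⟨r, hr⟩ := hact g₁ (hmem g₁ (by simp))
        obtain ⟨s, hs⟩ := hact g₂ (hmem g₂ (by simp))
        have key : ∀ x : M, (∀ a ∈ I, a • x = 0) →
            ∃ y : M, (∀ a ∈ I, a • y = 0) ∧ x = f • y := by
          intro x hx
          have hrx : ∀ a ∈ I, a • r • x = 0 := fun a ha => by
            rw [smul_comm, hx a ha, smul_zero]
          have hmk : (Submodule.Quotient.mk (r • x) : QuotSMulTop g₁ M) = 0 := by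
            refine hg₂ ?_
            simp only [smul_zero]
            rw [← Submodule.Quotient.mk_smul, Submodule.Quotient.mk_eq_zero, hs _ hrx,
              smul_comm f r, ← hr x hx, smul_comm]
            exact Submodule.smul_mem_pointwise_smul _ _ _ trivial
          rw [Submodule.Quotient.mk_eq_zero] at hmk
          obtain ⟨y, -, hy⟩ := hmk
          have hy' : g₁ • y = r • x := hy
          have hyK : ∀ a ∈ I, a • y = 0 := fun a ha => by
            refine hg₁ ?_
            simp only [smul_zero]
            rw [smul_comm, hy', hrx a ha]
          refine ⟨y, hyK, hg₁ ?_⟩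
          have hfy : ∀ a ∈ I, a • f • y = 0 := fun a ha => by
            rw [smul_comm, hyK a ha, smul_zero]
          simp only
          rw [hr x hx, hr _ hfy, smul_comm r f x, ← hy', hr y hyK, smul_comm r f (f • y)]
        have hbot : Submodule.torsionBySet A M I = ⊥ := by
          refine Submodule.eq_bot_of_le_smul_of_le_jacobson_bot (Ideal.span {f}) _
            (IsNoetherian.noetherian _) ?_ ?_
          · intro x hx
            rw [Submodule.mem_torsionBySet_iff] at hx
            obtain ⟨y, hy, rfl⟩ := key x fun a ha => hx ⟨a, ha⟩
            refine Submodule.smul_mem_smul (Ideal.mem_span_singleton_self f) ?_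
            rw [Submodule.mem_torsionBySet_iff]
            exact fun a => hy a a.2
          · rw [IsLocalRing.jacobson_eq_maximalIdeal ⊥ bot_ne_top]
            exact le_sup_right.trans hIf
        refine hu0 ((Submodule.mem_bot A).mp (hbot ▸ ?_))
        rw [Submodule.mem_torsionBySet_iff]
        exact fun a => hu a a.2

lemma HasGrade.of_sup_ofList [Module.Finite A M] {I : Ideal A} {fs : List A}
    (hI : I ≤ IsLocalRing.maximalIdeal A) (hfs : ∀ f ∈ fs, f ∈ IsLocalRing.maximalIdeal A) {d : ℕ}
    (h : HasGrade (I ⊔ Ideal.ofList fs) M (d + fs.length)) : HasGrade I M d := by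
  induction fs generalizing d with
  | nil => simpa using h
  | cons f fs ih =>
    simp only [List.mem_cons, forall_eq_or_imp] at hfs
    refine ih hfs.2 ?_
    refine HasGrade.of_sup_span_singleton (f := f) (sup_le hI ?_) hfs.1 ?_
    · exact Ideal.span_le.mpr hfs.2
    · rw [Ideal.ofList_cons] at h
      rw [sup_assoc, sup_comm (Ideal.ofList fs)]
      exact h

/-- A list whose length is the grade of the ideal it generates is a regular sequence. -/
lemma HasGrade.isWeaklyRegular [Module.Finite A M] {fs : List A}
    (hfs : ∀ f ∈ fs, f ∈ IsLocalRing.maximalIdeal A)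
    (h : HasGrade (Ideal.ofList fs) M fs.length) : IsWeaklyRegular M fs := by
  induction fs generalizing M with
  | nil => simp
  | cons f fs ih =>
    have hle : Ideal.ofList (f :: fs) ≤ IsLocalRing.maximalIdeal A := Ideal.span_le.mpr hfs
    have hfs' := hfs
    simp only [List.mem_cons, forall_eq_or_imp] at hfs'
    have h1 : HasGrade (Ideal.span {f}) M 1 := by
      refine HasGrade.of_sup_ofList (fs := fs) ?_ hfs'.2 ?_
      · exact (Ideal.span_singleton_le_iff_mem _).mpr hfs'.1
      · rw [Ideal.ofList_cons, List.length_cons, add_comm] at h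
        exact h
    have hf : IsSMulRegular M f := by
      obtain ⟨rs, hlen, hmem, hrs⟩ := h1
      obtain ⟨g, rfl⟩ := List.length_eq_one_iff.mp hlen
      obtain ⟨c, hc⟩ := Ideal.mem_span_singleton'.mp (hmem g (by simp))
      rw [isRegular_cons_iff, ← hc] at hrs
      exact IsSMulRegular.of_mul hrs.1
    have hfmem : f ∈ Ideal.ofList (f :: fs) := Ideal.subset_span (by simp)
    rw [isWeaklyRegular_cons_iff]
    refine ⟨hf, ih hfs'.2 (HasGrade.of_sup_span (f := f) ?_ ?_)⟩
    · rw [sup_comm, ← Ideal.ofList_cons]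
      exact HasGrade.quotSMulTop hle h hfmem hf
    · intro x
      obtain ⟨x, rfl⟩ := Submodule.Quotient.mk_surjective _ x
      rw [← Submodule.Quotient.mk_smul, Submodule.Quotient.mk_eq_zero]
      exact Submodule.smul_mem_pointwise_smul _ _ _ trivial

end Grade

lemma isWeaklyRegular_append_singleton_iff {R : Type*} [CommRing R] (rs : List R) (r : R) :
    IsWeaklyRegular R (rs ++ [r]) ↔ IsWeaklyRegular R rs ∧
      ∀ u, r * u ∈ Ideal.ofList rs → u ∈ Ideal.ofList rs := by
  rw [isWeaklyRegular_append_iff, isWeaklyRegular_singleton_iff,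
    isSMulRegular_quotient_iff_mem_of_smul_mem]
  simp

section Hilbert
variable {k R : Type*} [Field k] [CommRing R] [Algebra k R] (𝒜 : ℕ → Submodule k R)
  [GradedAlgebra 𝒜]

/-- The Hilbert series of the quotient of a graded algebra by the ideal `I`. -/
noncomputable def hilbertSeries (I : Ideal R) : PowerSeries ℤ :=
  PowerSeries.mk fun n => (Module.finrank k (𝒜 n) : ℤ) -
    Module.finrank k (𝒜 n ⊓ I.restrictScalars k : Submodule k R)

variable {𝒜}

lemma mem_of_mul_mem_of_isUnit_proj_zero {I : Ideal R} (hI : I.IsHomogeneous 𝒜) {f : R} {d : ℕ}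
    (hf : f ∈ 𝒜 d) {S : Submonoid R} (hS : ∀ s ∈ S, IsUnit (DirectSum.decompose 𝒜 s 0 : R))
    (hreg : ∀ u, f * u ∈ I → ∃ s ∈ S, s * u ∈ I) {u : R} (hu : f * u ∈ I) : u ∈ I := by
  classical
  rw [← DirectSum.sum_support_decompose 𝒜 u]
  refine Ideal.sum_mem _ fun n _ => ?_
  obtain ⟨s, hs, hsu⟩ := hreg (DirectSum.decompose 𝒜 u n : R) (by
    have := hI (d + n) hu
    rwa [DirectSum.coe_decompose_mul_add_of_left_mem 𝒜 hf] at this)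
  have h0 := hI (0 + n) hsu
  rw [DirectSum.coe_decompose_mul_add_of_right_mem 𝒜 (SetLike.coe_mem _)] at h0
  exact (Ideal.unit_mul_mem_iff_mem I (hS s hs)).mp h0

lemma finrank_inf_sup_span_singleton [∀ n, FiniteDimensional k (𝒜 n)] [IsDomain R] {I : Ideal R}
    (hI : I.IsHomogeneous 𝒜) {f : R} {d : ℕ} (hf : f ∈ 𝒜 d) (hf0 : f ≠ 0)
    (hreg : ∀ u, f * u ∈ I → u ∈ I) (n : ℕ) :
    Module.finrank k (𝒜 (d + n) ⊓ (I ⊔ Ideal.span {f}).restrictScalars k : Submodule k R) +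
      Module.finrank k (𝒜 n ⊓ I.restrictScalars k : Submodule k R) =
    Module.finrank k (𝒜 (d + n) ⊓ I.restrictScalars k : Submodule k R) +
      Module.finrank k (𝒜 n) := by
  have hinj : Function.Injective (LinearMap.mulLeft k f) :=
    fun x y h => mul_left_cancel₀ hf0 h
  have h1 := Submodule.finrank_sup_add_finrank_inf_eq
    (𝒜 (d + n) ⊓ I.restrictScalars k : Submodule k R) ((𝒜 n).map (LinearMap.mulLeft k f))
  have h2 : (𝒜 (d + n) ⊓ I.restrictScalars k : Submodule k R) ⊔
      (𝒜 n).map (LinearMap.mulLeft k f) =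
      𝒜 (d + n) ⊓ (I ⊔ Ideal.span {f}).restrictScalars k := by
    apply le_antisymm
    · refine sup_le (inf_le_inf_left _ fun x hx => (le_sup_left : I ≤ _) hx) ?_
      rintro _ ⟨x, hx, rfl⟩
      exact ⟨SetLike.mul_mem_graded hf hx,
        Ideal.mul_mem_right _ _ ((le_sup_right : _ ≤ I ⊔ Ideal.span {f})
          (Ideal.mem_span_singleton_self f))⟩
    · rintro x ⟨hx, hxI⟩
      obtain ⟨y, hy, z, hz, rfl⟩ := Submodule.mem_sup.mp hxI
      obtain ⟨c, rfl⟩ := Ideal.mem_span_singleton'.mp hz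
      rw [← DirectSum.decompose_of_mem_same 𝒜 hx, DirectSum.decompose_add, mul_comm c f]
      simp only [DirectSum.add_apply, Submodule.coe_add]
      rw [DirectSum.coe_decompose_mul_add_of_left_mem 𝒜 hf]
      exact Submodule.add_mem_sup ⟨SetLike.coe_mem _, hI _ hy⟩ ⟨_, SetLike.coe_mem _, rfl⟩
  have h3 : (𝒜 (d + n) ⊓ I.restrictScalars k : Submodule k R) ⊓
      (𝒜 n).map (LinearMap.mulLeft k f) =
      (𝒜 n ⊓ I.restrictScalars k : Submodule k R).map (LinearMap.mulLeft k f) := by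
    apply le_antisymm
    · rintro _ ⟨⟨_, hxI⟩, ⟨x, hx, rfl⟩⟩
      exact ⟨x, ⟨hx, hreg x hxI⟩, rfl⟩
    · rintro _ ⟨x, ⟨hx, hxI⟩, rfl⟩
      exact ⟨⟨SetLike.mul_mem_graded hf hx, Ideal.mul_mem_left _ _ hxI⟩, ⟨x, hx, rfl⟩⟩
  rw [h2, h3, ← (Submodule.equivMapOfInjective _ hinj _).finrank_eq,
    ← (Submodule.equivMapOfInjective _ hinj _).finrank_eq] at h1
  exact h1

lemma inf_sup_span_singleton_of_lt {I : Ideal R}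
    (hI : I.IsHomogeneous 𝒜) {f : R} {d : ℕ} (hf : f ∈ 𝒜 d) {n : ℕ} (hn : n < d) :
    (𝒜 n ⊓ (I ⊔ Ideal.span {f}).restrictScalars k : Submodule k R) =
      𝒜 n ⊓ I.restrictScalars k := by
  apply le_antisymm
  · rintro x ⟨hx, hxI⟩
    refine ⟨hx, ?_⟩
    obtain ⟨y, hy, z, hz, rfl⟩ := Submodule.mem_sup.mp hxI
    obtain ⟨c, rfl⟩ := Ideal.mem_span_singleton'.mp hz
    rw [← DirectSum.decompose_of_mem_same 𝒜 hx, DirectSum.decompose_add, mul_comm c f]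
    simp only [DirectSum.add_apply, Submodule.coe_add]
    rw [DirectSum.coe_decompose_mul_of_left_mem_of_not_le 𝒜 hf hn.not_ge, add_zero]
    exact hI _ hy
  · exact inf_le_inf_left _ fun x hx => (le_sup_left : I ≤ _) hx

lemma hilbertSeries_sup_span_singleton [∀ n, FiniteDimensional k (𝒜 n)] [IsDomain R] {I : Ideal R}
    (hI : I.IsHomogeneous 𝒜) {f : R} {d : ℕ} (hf : f ∈ 𝒜 d) (hf0 : f ≠ 0)
    (hreg : ∀ u, f * u ∈ I → u ∈ I) :
    hilbertSeries 𝒜 (I ⊔ Ideal.span {f}) = (1 - PowerSeries.X ^ d) * hilbertSeries 𝒜 I := by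
  ext n
  rw [sub_mul, one_mul, map_sub, PowerSeries.coeff_X_pow_mul']
  simp only [hilbertSeries, PowerSeries.coeff_mk]
  split_ifs with h
  · obtain ⟨n, rfl⟩ := Nat.exists_eq_add_of_le h
    have := finrank_inf_sup_span_singleton hI hf hf0 hreg n
    rw [Nat.add_sub_cancel_left]
    omega
  · rw [inf_sup_span_singleton_of_lt hI hf (not_le.mp h), sub_zero]

lemma isHomogeneous_ofList {ι : Type*} {f : ι → R} {d : ι → ℕ} (hf : ∀ i, f i ∈ 𝒜 (d i))
    (l : List ι) : (Ideal.ofList (l.map f)).IsHomogeneous 𝒜 := by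
  refine Ideal.homogeneous_span _ _ ?_
  intro x hx
  obtain ⟨i, -, rfl⟩ := List.mem_map.mp hx
  exact ⟨d i, hf i⟩

lemma hilbertSeries_ofList [∀ n, FiniteDimensional k (𝒜 n)] [IsDomain R] {ι : Type*}
    {f : ι → R} {d : ι → ℕ} (hf : ∀ i, f i ∈ 𝒜 (d i)) {l : List ι}
    (hl : IsWeaklyRegular R (l.map f)) (htop : Ideal.ofList (l.map f) ≠ ⊤) :
    hilbertSeries 𝒜 (Ideal.ofList (l.map f)) =
      (l.map fun i => 1 - PowerSeries.X ^ d i).prod * hilbertSeries 𝒜 ⊥ := by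
  induction l using List.reverseRecOn with
  | nil => simp
  | append_singleton l i ih =>
    rw [List.map_append, List.map_singleton, isWeaklyRegular_append_singleton_iff] at hl
    rw [List.map_append, List.map_singleton, Ideal.ofList_append] at htop
    have htop' : Ideal.ofList (l.map f) ≠ ⊤ := fun h => htop (by rw [h, top_sup_eq])
    have hf0 : f i ≠ 0 := fun h =>
      htop' ((Ideal.eq_top_iff_one _).mpr (hl.2 1 (by rw [h, zero_mul]; exact zero_mem _)))
    rw [List.map_append, List.map_singleton, Ideal.ofList_append, Ideal.ofList_singleton,
      hilbertSeries_sup_span_singleton (isHomogeneous_ofList hf l) (hf i) hf0 hl.2,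
      ih hl.1 htop', List.map_append, List.prod_append, List.map_singleton, List.prod_singleton]
    ring

end Hilbert

section CompleteIntersection
open MvPolynomial
attribute [local instance] MvPolynomial.weightedGradedAlgebra
variable {k σ τ : Type*} [Field k]

lemma isWeaklyRegular_map_X {l : List σ} (hl : l.Nodup) :
    IsWeaklyRegular (MvPolynomial σ k) (l.map (X : σ → MvPolynomial σ k)) := by
  have hspan : ∀ l : List σ, Ideal.ofList (l.map (X : σ → MvPolynomial σ k)) =
      Ideal.span ((X : σ → MvPolynomial σ k) '' {i | i ∈ l}) := by
    intro l
    refine congrArg Ideal.span ?_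
    ext x
    simp
  induction l using List.reverseRecOn with
  | nil => simp
  | append_singleton l i ih =>
    rw [List.nodup_append] at hl
    rw [List.map_append, List.map_singleton, isWeaklyRegular_append_singleton_iff]
    refine ⟨ih hl.1, fun u hu => ?_⟩
    rw [hspan, mem_ideal_span_X_image] at hu ⊢
    intro m hm
    obtain ⟨j, hj, hmj⟩ := hu (Finsupp.single i 1 + m) (by
      rw [mem_support_iff, coeff_X_mul]
      exact mem_support_iff.mp hm)
    refine ⟨j, hj, ?_⟩
    have hij : i ≠ j := fun h => hl.2.2 j hj i (by simp) h.symm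
    simpa [Finsupp.single_apply, hij] using hmj

lemma coe_decompose_zero {w : σ → ℕ} (hw : ∀ j, w j ≠ 0) (p : MvPolynomial σ k) :
    (DirectSum.decompose (weightedHomogeneousSubmodule k w) p 0 : MvPolynomial σ k) =
      C (constantCoeff p) :=
  (weightedDecomposition.decompose'_apply k w p 0).trans (weightedHomogeneousComponent_zero p hw)

/-- Weighted homogeneous polynomials, as many as there are variables, whose only common zero is the
origin form a regular sequence. -/
lemma isWeaklyRegular_of_X_mem_radical [Fintype σ] [Fintype τ]
    (hcard : Fintype.card σ = Fintype.card τ) {w : σ → ℕ} (hw : ∀ j, w j ≠ 0) {d : τ → ℕ}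
    {f : τ → MvPolynomial σ k} (hf : ∀ i, IsWeightedHomogeneous w (f i) (d i))
    (hf0 : ∀ i, constantCoeff (f i) = 0)
    (hrad : ∀ j, X j ∈ (Ideal.span (Set.range f)).radical) :
    IsWeaklyRegular (MvPolynomial σ k) ((Finset.univ : Finset τ).toList.map f) := by
  let 𝔪 : Ideal (MvPolynomial σ k) := RingHom.ker constantCoeff
  have : 𝔪.IsPrime := RingHom.ker_isPrime _
  let A := Localization.AtPrime 𝔪
  have hmem : ∀ p : MvPolynomial σ k, constantCoeff p = 0 →
      algebraMap _ A p ∈ IsLocalRing.maximalIdeal A := fun p hp =>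
    (IsLocalization.AtPrime.to_map_mem_maximal_iff A 𝔪 p).mpr hp
  have hofList : Ideal.ofList ((Finset.univ : Finset τ).toList.map f) =
      Ideal.span (Set.range f) := by
    refine congrArg Ideal.span ?_
    ext x
    simp
  have hfA : ∀ g ∈ ((Finset.univ : Finset τ).toList.map f).map (algebraMap _ A),
      g ∈ IsLocalRing.maximalIdeal A := by
    intro g hg
    simp only [List.map_map, List.mem_map, Function.comp_apply] at hg
    obtain ⟨i, -, rfl⟩ := hg
    exact hmem _ (hf0 i)
  have hXA : ∀ g ∈ ((Finset.univ : Finset σ).toList.map X).map (algebraMap (MvPolynomial σ k) A),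
      g ∈ IsLocalRing.maximalIdeal A := by
    intro g hg
    simp only [List.map_map, List.mem_map, Function.comp_apply] at hg
    obtain ⟨j, -, rfl⟩ := hg
    exact hmem _ (by simp)
  have hA : IsWeaklyRegular A (((Finset.univ : Finset τ).toList.map f).map (algebraMap _ A)) := by
    refine HasGrade.isWeaklyRegular hfA ?_
    have hI : Ideal.ofList (((Finset.univ : Finset τ).toList.map f).map (algebraMap _ A)) ≤
        IsLocalRing.maximalIdeal A := Ideal.span_le.mpr hfA
    refine HasGrade.of_le_radical
      (J := Ideal.ofList (((Finset.univ : Finset σ).toList.map X).map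
        (algebraMap (MvPolynomial σ k) A)))
      hI (Ideal.span_le.mpr hXA) ?_ ?_
    · refine ⟨_, by simp [hcard], fun r hr => Ideal.subset_span hr, ?_⟩
      exact IsRegular.of_isWeaklyRegular_of_mem_maximalIdeal A hXA
        (IsWeaklyRegular.of_flat (isWeaklyRegular_map_X (Finset.nodup_toList _)))
    · refine Ideal.span_le.mpr fun g hg => ?_
      simp only [List.map_map, Set.mem_ofPred_eq, List.mem_map, Function.comp_apply] at hg
      obtain ⟨j, -, rfl⟩ := hg
      obtain ⟨n, hn⟩ := hrad j
      refine ⟨n, ?_⟩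
      rw [← map_pow, ← Ideal.map_ofList, hofList]
      exact Ideal.mem_map_of_mem _ hn
  generalize (Finset.univ : Finset τ).toList = l at hA
  induction l using List.reverseRecOn with
  | nil => simp
  | append_singleton l i ih =>
    rw [List.map_append, List.map_singleton, List.map_append, List.map_singleton,
      isWeaklyRegular_append_singleton_iff] at hA
    rw [List.map_append, List.map_singleton, isWeaklyRegular_append_singleton_iff]
    refine ⟨ih hA.1, fun u hu => ?_⟩
    refine mem_of_mul_mem_of_isUnit_proj_zero (S := 𝔪.primeCompl)
      (isHomogeneous_ofList (𝒜 := weightedHomogeneousSubmodule k w) hf l) (hf i) ?_ ?_ hu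
    · intro s hs
      rw [coe_decompose_zero hw]
      exact (IsUnit.mk0 _ hs).map C
    · intro u hu
      have := hA.2 (algebraMap _ A u) (by
        rw [← map_mul, ← Ideal.map_ofList]
        exact Ideal.mem_map_of_mem _ hu)
      rw [← Ideal.map_ofList, IsLocalization.algebraMap_mem_map_algebraMap_iff 𝔪.primeCompl] at this
      exact this

lemma hilbertSeries_map_X [Fintype σ] {w : σ → ℕ} (hw : ∀ j, w j ≠ 0) :
    hilbertSeries (weightedHomogeneousSubmodule k w)
      (Ideal.ofList ((Finset.univ : Finset σ).toList.map X)) = 1 := by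
  have hmem : ∀ p : MvPolynomial σ k,
      p ∈ Ideal.ofList ((Finset.univ : Finset σ).toList.map X) ↔ constantCoeff p = 0 := by
    intro p
    have : Ideal.ofList ((Finset.univ : Finset σ).toList.map (X : σ → MvPolynomial σ k)) =
        Ideal.span (X '' Set.univ) := by
      refine congrArg Ideal.span ?_
      ext x
      simp
    rw [this, mem_ideal_span_X_image, constantCoeff_eq]
    constructor
    · intro h
      by_contra h0
      simpa using h 0 (mem_support_iff.mpr h0)
    · intro h m hm
      by_contra! hm'
      refine mem_support_iff.mp hm ?_
      rwa [show m = 0 from Finsupp.ext fun i => hm' i trivial]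
  ext n
  simp only [hilbertSeries, PowerSeries.coeff_mk, PowerSeries.coeff_one]
  split_ifs with hn
  · subst hn
    have h1 : weightedHomogeneousSubmodule k w 0 = Submodule.span k {1} := by
      ext p
      rw [Submodule.mem_span_singleton]
      constructor
      · intro hp
        refine ⟨constantCoeff p, ?_⟩
        rw [← DirectSum.decompose_of_mem_same (weightedHomogeneousSubmodule k w) hp,
          coe_decompose_zero hw, smul_eq_C_mul, mul_one, constantCoeff_C]
      · rintro ⟨c, rfl⟩
        exact Submodule.smul_mem _ _ (isWeightedHomogeneous_one k w)
    have h2 : weightedHomogeneousSubmodule k w 0 ⊓ (Ideal.ofList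
        ((Finset.univ : Finset σ).toList.map (X : σ → MvPolynomial σ k))).restrictScalars k = ⊥ := by
      rw [eq_bot_iff]
      rintro p ⟨hp, hpI⟩
      rw [← DirectSum.decompose_of_mem_same (weightedHomogeneousSubmodule k w) hp,
          coe_decompose_zero hw, (hmem p).mp hpI, map_zero]
      exact zero_mem _
    rw [h2, h1, finrank_span_singleton one_ne_zero]
    simp
  · rw [inf_eq_left.mpr, sub_self]
    intro p hp
    refine (hmem p).mpr ?_
    by_contra h0
    have := hp h0
    simp only [map_zero] at this
    exact hn this.symm

/-- The Hilbert series of a weighted homogeneous zero-dimensional complete intersection is a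
polynomial with nonnegative coefficients. -/
theorem exists_polynomial_nat_mul_prod_eq_prod [Fintype σ] [Fintype τ]
    (hcard : Fintype.card σ = Fintype.card τ) {w : σ → ℕ} (hw : ∀ j, w j ≠ 0) {d : τ → ℕ}
    {f : τ → MvPolynomial σ k} (hf : ∀ i, IsWeightedHomogeneous w (f i) (d i))
    (hf0 : ∀ i, constantCoeff (f i) = 0)
    (hrad : ∀ j, X j ∈ (Ideal.span (Set.range f)).radical) :
    ∃ p : Polynomial ℕ, p.map (Nat.castRingHom ℤ) * ∏ j, (1 - Polynomial.X ^ w j) =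
      ∏ i, (1 - Polynomial.X ^ d i) := by
  have hfin : ∀ n, FiniteDimensional k (weightedHomogeneousSubmodule k w n) := fun n =>
    Module.Finite.iff_fg.mpr (weightedHomogeneousSubmodule_fg k w hw n)
  have hofList : Ideal.ofList ((Finset.univ : Finset τ).toList.map f) =
      Ideal.span (Set.range f) := by
    refine congrArg Ideal.span ?_
    ext x
    simp
  have hker : ∀ l : List (MvPolynomial σ k), (∀ p ∈ l, constantCoeff p = 0) →
      Ideal.ofList l ≠ ⊤ := by
    intro l hl htop
    have hle : Ideal.ofList l ≤ RingHom.ker constantCoeff := Ideal.span_le.mpr hl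
    rw [htop, top_le_iff] at hle
    exact RingHom.ker_ne_top _ hle
  have hX := hilbertSeries_ofList (𝒜 := weightedHomogeneousSubmodule k w) (d := w)
    (f := (X : σ → MvPolynomial σ k)) (fun j => isWeightedHomogeneous_X k w j)
    (isWeaklyRegular_map_X (Finset.nodup_toList Finset.univ)) (hker _ (by simp))
  have hF := hilbertSeries_ofList (𝒜 := weightedHomogeneousSubmodule k w) hf
    (isWeaklyRegular_of_X_mem_radical hcard hw hf hf0 hrad) (hker _ (by simpa using hf0))
  rw [hilbertSeries_map_X hw, Finset.prod_map_toList] at hX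
  rw [Finset.prod_map_toList, hofList] at hF
  choose L hL using hrad
  -- all sufficiently large degrees lie in the ideal
  have hlarge : ∀ n, ∑ j, w j * L j < n →
      weightedHomogeneousSubmodule k w n ≤ (Ideal.span (Set.range f)).restrictScalars k := by
    intro n hn p hp
    rw [Submodule.restrictScalars_mem, p.as_sum]
    refine Ideal.sum_mem _ fun m hm => ?_
    have hwm := hp (mem_support_iff.mp hm)
    obtain ⟨j, hj⟩ : ∃ j, L j ≤ m j := by
      by_contra! hlt
      rw [Finsupp.weight_apply, Finsupp.sum_fintype _ _ (by simp)] at hwm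
      refine hn.not_ge (hwm ▸ Finset.sum_le_sum fun j _ => ?_)
      rw [smul_eq_mul, mul_comm]
      exact Nat.mul_le_mul_left _ (hlt j).le
    have hsplit : monomial m (p.coeff m) =
        X j ^ L j * monomial (m - Finsupp.single j (L j)) (p.coeff m) := by
      rw [X_pow_eq_monomial, monomial_mul, one_mul, add_tsub_cancel_of_le]
      simpa using hj
    rw [hsplit]
    exact Ideal.mul_mem_right _ _ (hL j)
  let h : ℕ → ℕ := fun n => Module.finrank k (weightedHomogeneousSubmodule k w n) -
    Module.finrank k (weightedHomogeneousSubmodule k w n ⊓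
      (Ideal.span (Set.range f)).restrictScalars k : Submodule k (MvPolynomial σ k))
  let p : Polynomial ℕ := ∑ n ∈ Finset.range (∑ j, w j * L j + 1), Polynomial.monomial n (h n)
  refine ⟨p, ?_⟩
  have hp : ((p.map (Nat.castRingHom ℤ) : Polynomial ℤ) : PowerSeries ℤ) =
      hilbertSeries (weightedHomogeneousSubmodule k w) (Ideal.span (Set.range f)) := by
    ext n
    have hle : Module.finrank k (weightedHomogeneousSubmodule k w n ⊓
      (Ideal.span (Set.range f)).restrictScalars k : Submodule k (MvPolynomial σ k)) ≤
      Module.finrank k (weightedHomogeneousSubmodule k w n) := Submodule.finrank_mono inf_le_left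
    simp only [Polynomial.coeff_coe, Polynomial.coeff_map, p, Polynomial.finsetSum_coeff,
      Polynomial.coeff_monomial, hilbertSeries, PowerSeries.coeff_mk, Finset.sum_ite_eq',
      Finset.mem_range]
    split_ifs with hn
    · simp [h, Nat.cast_sub hle]
    · rw [inf_eq_left.mpr (hlarge n (by omega))]
      simp
  apply Polynomial.coe_injective
  have hcoe : ∀ {ι : Type _} [Fintype ι] (e : ι → ℕ),
      ((∏ i, (1 - Polynomial.X ^ e i) : Polynomial ℤ) : PowerSeries ℤ) =
        ∏ i, (1 - PowerSeries.X ^ e i) := by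
    intro ι _ e
    rw [← Polynomial.coeToPowerSeries.ringHom_apply, map_prod]
    simp
  rw [Polynomial.coe_mul, hp, hcoe, hF, mul_assoc, mul_comm (hilbertSeries _ _), ← hX, mul_one]
  rw [← Polynomial.coeToPowerSeries.ringHom_apply, map_prod]
  simp

end CompleteIntersection

section Generic
open MvPolynomial

lemma exists_weight_eq_of_mem_closure {σ : Type*} {w : σ → ℕ} {J : Finset σ} {x : ℕ}
    (hx : x ∈ AddSubmonoid.closure (w '' (J : Set σ))) :
    ∃ m : σ →₀ ℕ, m.support ⊆ J ∧ Finsupp.weight w m = x := by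
  classical
  induction hx using AddSubmonoid.closure_induction with
  | mem x hx =>
    obtain ⟨j, hj, rfl⟩ := hx
    refine ⟨Finsupp.single j 1, Finsupp.support_single_subset.trans (by simpa using hj), ?_⟩
    simp [Finsupp.weight_single]
  | zero => exact ⟨0, by simp, by simp⟩
  | add x y _ _ hx hy =>
    obtain ⟨a, ha, rfl⟩ := hx
    obtain ⟨b, hb, rfl⟩ := hy
    exact ⟨a + b, Finsupp.support_add.trans (Finset.union_subset ha hb), map_add _ _ _⟩

lemma card_le_card_of_forall_isAlgebraic {F K ι : Type*} [Field F] [Field K] [Algebra F K]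
    [Fintype ι] {c : ι → K} (hc : AlgebraicIndependent F c) (T : Finset K)
    (h : ∀ i, IsAlgebraic (Algebra.adjoin F (T : Set K)) (c i)) :
    Fintype.card ι ≤ T.card := by
  have hind : (AlgebraicIndependent.matroid F K).Indep (Set.range c) :=
    AlgebraicIndependent.matroid_indep_iff.mpr hc.to_subtype_range
  have hsub : Set.range c ⊆ (AlgebraicIndependent.matroid F K).closure T := by
    rintro _ ⟨i, rfl⟩
    rw [AlgebraicIndependent.matroid_closure_eq]
    exact h i
  have h1 := (AlgebraicIndependent.matroid F K).eRk_mono hsub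
  rw [hind.eRk_eq_encard, Matroid.eRk_closure_eq] at h1
  have h2 := h1.trans ((AlgebraicIndependent.matroid F K).eRk_le_encard T)
  rw [Set.encard_coe_eq_coe_finsetCard, ← Set.image_univ, hc.injective.encard_image,
    Set.encard_univ] at h2
  simpa using h2

/-- A generic combination of monomials, one for every possible support, vanishes only at the
origin. -/
lemma eq_zero_of_forall_sum_eq_zero {F K σ τ : Type*} [Field F] [Field K] [Algebra F K]
    [Fintype σ] [Fintype τ] {c : τ × Finset σ → K} (hc : AlgebraicIndependent F c)
    {μ : τ → Finset σ → MvPolynomial σ F} {v : σ → K}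
    (hv : ∀ i, ∑ J, c (i, J) * aeval v (μ i J) = 0) (h01 : v ≠ 0 → ∃ j, v j = 1)
    (hμ : ∀ J : Finset σ, (∀ j, j ∈ J ↔ v j ≠ 0) →
      ∃ S : Finset τ, J.card ≤ S.card ∧ ∀ i ∈ S, aeval v (μ i J) ≠ 0) : v = 0 := by
  classical
  by_contra hv0
  obtain ⟨j₀, hj₀⟩ := h01 hv0
  let J : Finset σ := {j | v j ≠ 0}
  have hJ : ∀ j, j ∈ J ↔ v j ≠ 0 := fun j => by simp [J]
  obtain ⟨S, hcard, hS⟩ := hμ J hJ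
  let T : Finset K := (Finset.univ \ S ×ˢ {J}).image c ∪ (J.erase j₀).image v
  have hT : T.card < Fintype.card (τ × Finset σ) := by
    have h1 : ((Finset.univ \ S ×ˢ {J}).image c).card ≤
        Fintype.card (τ × Finset σ) - S.card := by
      refine Finset.card_image_le.trans (le_of_eq ?_)
      rw [Finset.card_sdiff_of_subset (Finset.subset_univ _), Finset.card_product]
      simp
    have h2 : ((J.erase j₀).image v).card ≤ J.card - 1 := by
      refine Finset.card_image_le.trans (le_of_eq ?_)
      exact Finset.card_erase_of_mem ((hJ _).mpr (by simp [hj₀]))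
    have h3 : 0 < J.card := Finset.card_pos.mpr ⟨j₀, (hJ _).mpr (by simp [hj₀])⟩
    have h4 : S.card ≤ Fintype.card (τ × Finset σ) := by
      have := Finset.card_le_univ (S ×ˢ {J})
      simpa using this
    have h5 := Finset.card_union_le ((Finset.univ \ S ×ˢ {J}).image c) ((J.erase j₀).image v)
    change (((Finset.univ \ S ×ˢ {J}).image c) ∪ ((J.erase j₀).image v)).card < _
    omega
  refine hT.not_ge (card_le_card_of_forall_isAlgebraic hc T ?_)
  let E := Subalgebra.algebraicClosure (Algebra.adjoin F (T : Set K)) K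
  have hTE : ∀ x ∈ T, x ∈ E := fun x hx =>
    isAlgebraic_algebraMap (⟨x, Algebra.subset_adjoin hx⟩ : Algebra.adjoin F (T : Set K))
  have hvE : ∀ j, v j ∈ E := by
    intro j
    by_cases hj : v j = 0
    · rw [hj]
      exact zero_mem _
    by_cases hjj : j = j₀
    · rw [hjj, hj₀]
      exact one_mem _
    · refine hTE _ (Finset.mem_union_right _ (Finset.mem_image_of_mem _ ?_))
      exact Finset.mem_erase.mpr ⟨hjj, (hJ j).mpr hj⟩
  have hpE : ∀ p : MvPolynomial σ F, aeval v p ∈ E := by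
    intro p
    have : aeval v p ∈ Algebra.adjoin F (Set.range v) := by
      rw [Algebra.adjoin_range_eq_range_aeval]
      exact ⟨p, rfl⟩
    have hle : Algebra.adjoin F (Set.range v) ≤ E.restrictScalars F :=
      Algebra.adjoin_le (by rintro _ ⟨j, rfl⟩; exact hvE j)
    exact hle this
  have hcE : ∀ x, x ∉ S ×ˢ {J} → c x ∈ E := fun x hx =>
    hTE _ (Finset.mem_union_left _ (Finset.mem_image_of_mem _ (by simpa using hx)))
  rintro ⟨i, J'⟩
  by_cases hmem : (i, J') ∈ S ×ˢ {J}
  · simp only [Finset.mem_product, Finset.mem_singleton] at hmem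
    obtain ⟨hi, rfl⟩ := hmem
    have hsum := hv i
    rw [← Finset.add_sum_erase _ _ (Finset.mem_univ J)] at hsum
    have heq : c (i, J) = -(∑ J' ∈ Finset.univ.erase J, c (i, J') * aeval v (μ i J')) *
        (aeval v (μ i J))⁻¹ := by
      rw [eq_mul_inv_iff_mul_eq₀ (hS i hi)]
      exact eq_neg_of_add_eq_zero_left hsum
    have hnum : -(∑ J' ∈ Finset.univ.erase J, c (i, J') * aeval v (μ i J')) ∈ E := by
      refine neg_mem (sum_mem fun J' hJ' => mul_mem (hcE _ ?_) (hpE _))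
      simp only [Finset.mem_product, Finset.mem_singleton, not_and]
      exact fun _ => Finset.ne_of_mem_erase hJ'
    have hden : (aeval v (μ i J))⁻¹ ∈ E := IsAlgebraic.inv (hpE (μ i J))
    rw [heq]
    exact mul_mem hnum hden
  · exact hcE _ hmem

lemma aeval_weighted_smul {F K σ : Type*} [CommSemiring F] [CommSemiring K] [Algebra F K]
    {w : σ → ℕ} {d : ℕ} {p : MvPolynomial σ F} (hp : IsWeightedHomogeneous w p d)
    (t : K) (v : σ → K) : aeval (fun j => t ^ w j * v j) p = t ^ d * aeval v p := by
  simp only [aeval_def, eval₂_eq, Finset.mul_sum]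
  refine Finset.sum_congr rfl fun m hm => ?_
  have hm' := hp (mem_support_iff.mp hm)
  rw [Finsupp.weight_apply, Finsupp.sum] at hm'
  simp only [mul_pow, Finset.prod_mul_distrib]
  rw [← hm', ← Finset.prod_pow_eq_pow_sum]
  simp only [smul_eq_mul, ← pow_mul]
  simp only [mul_comm (w _)]
  ring

/-- If every set `J` of variables generates a monoid containing at least `|J|` of the degrees, then
there are weighted homogeneous polynomials of these degrees whose only common zero is the origin. -/
theorem exists_isWeightedHomogeneous_X_mem_radical {σ τ : Type} [Fintype σ] [Fintype τ]
    {w : σ → ℕ} (hw : ∀ j, w j ≠ 0) {d : τ → ℕ}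
    (hall : ∀ J : Finset σ, ∃ S : Finset τ, J.card ≤ S.card ∧
      ∀ i ∈ S, d i ∈ AddSubmonoid.closure (w '' (J : Set σ))) :
    ∃ (K : Type) (_ : Field K) (f : τ → MvPolynomial σ K),
      (∀ i, IsWeightedHomogeneous w (f i) (d i)) ∧
      ∀ j, X j ∈ (Ideal.span (Set.range f)).radical := by
  classical
  let P := FractionRing (MvPolynomial (τ × Finset σ) ℚ)
  let K := AlgebraicClosure P
  let c : τ × Finset σ → K := fun x => algebraMap (MvPolynomial (τ × Finset σ) ℚ) K (X x)
  have hinj : Function.Injective (algebraMap (MvPolynomial (τ × Finset σ) ℚ) K) := by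
    rw [IsScalarTower.algebraMap_eq _ P K]
    exact (algebraMap P K).injective.comp (IsFractionRing.injective _ _)
  have hc : AlgebraicIndependent ℚ c :=
    (MvPolynomial.algebraicIndependent_X (τ × Finset σ) ℚ).map'
      (f := IsScalarTower.toAlgHom ℚ (MvPolynomial (τ × Finset σ) ℚ) K) hinj
  let μ : τ → Finset σ → MvPolynomial σ ℚ := fun i J =>
    if h : d i ∈ AddSubmonoid.closure (w '' (J : Set σ)) then
      monomial (exists_weight_eq_of_mem_closure h).choose 1 else 0
  have hμ : ∀ i J, IsWeightedHomogeneous w (μ i J) (d i) := by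
    intro i J
    by_cases h : d i ∈ AddSubmonoid.closure (w '' (J : Set σ))
    · simp only [μ, h, dif_pos]
      exact isWeightedHomogeneous_monomial _ _ _ (exists_weight_eq_of_mem_closure h).choose_spec.2
    · simp only [μ, h, dif_neg, not_false_eq_true]
      exact isWeightedHomogeneous_zero _ _ _
  let f : τ → MvPolynomial σ K := fun i => ∑ J, C (c (i, J)) * map (algebraMap ℚ K) (μ i J)
  refine ⟨K, inferInstance, f, fun i => ?_, fun j => ?_⟩
  · refine IsWeightedHomogeneous.sum _ _ _ fun J _ => IsWeightedHomogeneous.C_mul ?_ _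
    intro m hm
    refine hμ i J fun h0 => hm ?_
    rw [coeff_map, h0, map_zero]
  · rw [← vanishingIdeal_zeroLocus_eq_radical (K := K), mem_vanishingIdeal_iff]
    intro v hv
    have hev : ∀ i, ∑ J, c (i, J) * aeval v (μ i J) = 0 := by
      intro i
      have := hv (f i) (Ideal.subset_span ⟨i, rfl⟩)
      simpa [f, aeval_def, eval₂_map] using this
    suffices v = 0 by simp [this]
    by_contra hv0
    obtain ⟨j₀, hj₀⟩ := Function.ne_iff.mp hv0
    obtain ⟨t, ht⟩ := IsAlgClosed.exists_pow_nat_eq (v j₀)⁻¹ (Nat.pos_of_ne_zero (hw j₀))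
    have ht0 : t ≠ 0 := by
      rintro rfl
      rw [zero_pow (hw j₀)] at ht
      exact inv_ne_zero hj₀ ht.symm
    have hv' := eq_zero_of_forall_sum_eq_zero hc (μ := μ) (v := fun j => t ^ w j * v j) ?_ ?_ ?_
    · have := congrFun hv' j₀
      simp only [ht, Pi.zero_apply] at this
      rw [inv_mul_cancel₀ hj₀] at this
      exact one_ne_zero this
    · intro i
      simp_rw [aeval_weighted_smul (hμ i _), mul_left_comm (c _)]
      rw [← Finset.mul_sum, hev, mul_zero]
    · refine fun _ => ⟨j₀, ?_⟩
      rw [ht, inv_mul_cancel₀ hj₀]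
    · intro J hJ
      obtain ⟨S, hcard, hS⟩ := hall J
      refine ⟨S, hcard, fun i hi => ?_⟩
      simp only [μ, hS i hi, dif_pos, aeval_monomial, map_one, one_mul]
      refine Finset.prod_ne_zero_iff.mpr fun j hj => pow_ne_zero _ ?_
      exact (hJ j).mp ((exists_weight_eq_of_mem_closure (hS i hi)).choose_spec.1 hj)

end Generic

lemma exists_polynomial_nat_of_forall_closure {σ τ : Type} [Fintype σ] [Fintype τ]
    (hcard : Fintype.card σ = Fintype.card τ) {w : σ → ℕ} (hw : ∀ j, w j ≠ 0) {d : τ → ℕ}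
    (hd : ∀ i, d i ≠ 0)
    (hall : ∀ J : Finset σ, ∃ S : Finset τ, J.card ≤ S.card ∧
      ∀ i ∈ S, d i ∈ AddSubmonoid.closure (w '' (J : Set σ))) :
    ∃ p : Polynomial ℕ, p.map (Nat.castRingHom ℤ) * ∏ j, (1 - Polynomial.X ^ w j) =
      ∏ i, (1 - Polynomial.X ^ d i) := by
  obtain ⟨K, _, f, hf, hrad⟩ := exists_isWeightedHomogeneous_X_mem_radical hw hall
  refine exists_polynomial_nat_mul_prod_eq_prod hcard hw hf (fun i => ?_) hrad
  by_contra h0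
  exact hd i (by simpa using (hf i h0).symm)

section Counting
open scoped Classical in
/-- The number of elements of `H` among `1, …, x`. -/
def countPos (H : AddSubmonoid ℕ) (x : ℕ) : ℕ := Nat.count (fun y => y + 1 ∈ H) x

variable {H : AddSubmonoid ℕ}

lemma countPos_mono : Monotone (countPos H) := by
  classical exact Nat.count_monotone _

lemma countPos_add_le_of_mem {c : ℕ} (hc : c ∈ H) {x y : ℕ} (hxy : x ≤ y) :
    countPos H (x + c) + countPos H y ≤ countPos H (y + c) + countPos H x := by
  induction y, hxy using Nat.le_induction with
  | base => exact le_rfl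
  | succ y _ ih =>
    have himp : y + 1 ∈ H → y + c + 1 ∈ H := fun h => by
      rw [add_right_comm]
      exact add_mem h hc
    rw [add_right_comm y 1 c]
    unfold countPos at *
    rw [Nat.count_succ, Nat.count_succ]
    split_ifs <;> first | omega | tauto

lemma countPos_eq_zero {x : ℕ} (h : ∀ c ∈ H, 1 ≤ c → x < c) : countPos H x = 0 := by
  classical
  unfold countPos
  rw [Nat.count_eq_card_filter_range, Finset.card_eq_zero, Finset.filter_eq_empty_iff]
  intro y hy hyH
  have := h _ hyH (by omega)
  simp only [Finset.mem_range] at hy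
  omega

/-- The monoid version of the integrality criterion for the odd super Catalan numbers. -/
lemma countPos_superCatalan_le (H : AddSubmonoid ℕ) (m n : ℕ) :
    countPos H (m + n + 1) + countPos H m + countPos H n ≤
      countPos H (2 * m + 1) + countPos H (2 * n) := by
  induction hs : m + n using Nat.strong_induction_on generalizing m n with
  | _ s ih =>
    subst hs
    rcases le_or_gt n m with hnm | hmn
    · by_cases hex : ∃ c ∈ H, 1 ≤ c ∧ c ≤ m
      · obtain ⟨c, hc, hc1, hcm⟩ := hex
        obtain ⟨a, rfl⟩ := Nat.exists_eq_add_of_le' hcm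
        have h0 := ih (a + n) (by omega) a n rfl
        have h1 := countPos_add_le_of_mem hc (x := a + n + 1) (y := 2 * a + 1 + c) (by omega)
        have h2 := countPos_add_le_of_mem hc (x := a) (y := 2 * a + 1) (by omega)
        rw [show a + c + n + 1 = a + n + 1 + c by ring,
          show 2 * (a + c) + 1 = 2 * a + 1 + c + c by ring]
        omega
      · push Not at hex
        have hm := countPos_eq_zero (H := H) (x := m) hex
        have hn := countPos_mono (H := H) hnm
        have := countPos_mono (H := H) (show m + n + 1 ≤ 2 * m + 1 by omega)
        omega
    · by_cases hex : ∃ c ∈ H, 1 ≤ c ∧ c ≤ n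
      · obtain ⟨c, hc, hc1, hcm⟩ := hex
        obtain ⟨a, rfl⟩ := Nat.exists_eq_add_of_le' hcm
        have h0 := ih (m + a) (by omega) m a rfl
        have h1 := countPos_add_le_of_mem hc (x := m + a + 1) (y := 2 * a + c) (by omega)
        have h2 := countPos_add_le_of_mem hc (x := a) (y := 2 * a) (by omega)
        rw [show m + (a + c) + 1 = m + a + 1 + c by ring,
          show 2 * (a + c) = 2 * a + c + c by ring]
        omega
      · push Not at hex
        have hn := countPos_eq_zero (H := H) (x := n) hex
        have hm := countPos_mono (H := H) hmn.le
        have := countPos_mono (H := H) (show m + n + 1 ≤ 2 * n by omega)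
        omega

open scoped Classical in
lemma card_filter_fin_succ_mem (H : AddSubmonoid ℕ) (N : ℕ) :
    (Finset.univ.filter fun i : Fin N => (i : ℕ) + 1 ∈ H).card = countPos H N := by
  rw [countPos, Nat.count_eq_card_filter_range, ← Finset.card_map Fin.valEmbedding]
  congr 1
  ext y
  simp only [Finset.mem_map, Finset.mem_filter, Finset.mem_univ, true_and, Finset.mem_range,
    Fin.valEmbedding_apply]
  exact ⟨fun ⟨i, hi, h⟩ => h ▸ ⟨i.2, hi⟩, fun ⟨hy, h⟩ => ⟨⟨y, hy⟩, h, rfl⟩⟩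

end Counting

lemma exists_polynomial_nat_superCatalan (m n : ℕ) :
    ∃ p : Polynomial ℕ, p.map (Nat.castRingHom ℤ) *
      ((∏ i ∈ Finset.range (m + n + 1), (1 - Polynomial.X ^ (i + 1))) *
        ((∏ i ∈ Finset.range m, (1 - Polynomial.X ^ (i + 1))) *
        ∏ i ∈ Finset.range n, (1 - Polynomial.X ^ (i + 1)))) =
      (∏ i ∈ Finset.range (2 * m + 1), (1 - Polynomial.X ^ (i + 1))) *
        ∏ i ∈ Finset.range (2 * n), (1 - Polynomial.X ^ (i + 1)) := by
  classical
  let w : Fin (m + n + 1) ⊕ (Fin m ⊕ Fin n) → ℕ :=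
    Sum.elim (fun i => i + 1) (Sum.elim (fun i => i + 1) fun i => i + 1)
  let d : Fin (2 * m + 1) ⊕ Fin (2 * n) → ℕ := Sum.elim (fun i => i + 1) fun i => i + 1
  obtain ⟨p, hp⟩ := exists_polynomial_nat_of_forall_closure (w := w) (d := d)
    (by simp only [Fintype.card_sum, Fintype.card_fin]; omega)
    (by rintro (i | i | i) <;> simp [w]) (by rintro (i | i) <;> simp [d]) fun J => by
      let H := AddSubmonoid.closure (w '' (J : Set _))
      refine ⟨Finset.univ.filter fun i => d i ∈ H, ?_, fun i hi => (Finset.mem_filter.mp hi).2⟩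
      have hJ : J ⊆ Finset.univ.filter fun j => w j ∈ H := fun j hj =>
        Finset.mem_filter.mpr ⟨Finset.mem_univ _, AddSubmonoid.subset_closure ⟨j, hj, rfl⟩⟩
      refine (Finset.card_le_card hJ).trans ?_
      have := countPos_superCatalan_le H m n
      simp only [← card_filter_fin_succ_mem] at this
      simp only [Finset.card_filter, Fintype.sum_sum_type] at this ⊢
      rw [← add_assoc]
      exact this
  refine ⟨p, ?_⟩
  simpa [Fintype.prod_sum_type, w, d, Finset.prod_range] using hp

lemma one_sub_q_pow_ne_zero (n : ℕ) : 1 - q ^ (n + 1) ≠ 0 := by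
  have h : (1 - Polynomial.X ^ (n + 1) : Polynomial ℚ) ≠ 0 := fun h => by
    simpa using congrArg (Polynomial.eval 0) h
  simpa [q] using (map_ne_zero_iff _ (RatFunc.algebraMap_injective ℚ)).mpr h

lemma qfact_mul_pow (n : ℕ) :
    qfact n * (1 - q) ^ n = ∏ i ∈ Finset.range n, (1 - q ^ (i + 1)) := by
  have h : (1 - q) ≠ 0 := by simpa using one_sub_q_pow_ne_zero 0
  have : (1 - q) ^ n = ∏ i ∈ Finset.range n, (1 - q) := by simp
  rw [this, qfact, ← Finset.prod_mul_distrib]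
  exact Finset.prod_congr rfl fun i _ => div_mul_cancel₀ _ h

lemma qfact_ne_zero (n : ℕ) : qfact n ≠ 0 := by
  refine left_ne_zero_of_mul (b := (1 - q) ^ n) ?_
  rw [qfact_mul_pow]
  exact Finset.prod_ne_zero_iff.mpr fun i _ => one_sub_q_pow_ne_zero i

/-- Theorem 1: for all `m, n ∈ ℕ`, the odd `q`-super Catalan number
`C_{m,n}(q)` is a polynomial in `q` with nonnegative integer coefficients. -/
theorem oddCatalan_isNonnegPoly (m n : ℕ) : IsNonnegPoly (oddCatalan m n) := by
  obtain ⟨p, hp⟩ := exists_polynomial_nat_superCatalan m n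
  refine ⟨p, ?_⟩
  have hq : (1 - q) ≠ 0 := by simpa using one_sub_q_pow_ne_zero 0
  have h := congrArg (fun r => algebraMap (Polynomial ℚ) (RatFunc ℚ)
    (r.map (Int.castRingHom ℚ))) hp
  have hmap : (p.map (Nat.castRingHom ℤ)).map (Int.castRingHom ℚ) =
      p.map (Nat.castRingHom ℚ) := by
    rw [Polynomial.map_map]
    congr 1
  simp only [Polynomial.map_mul, Polynomial.map_prod, Polynomial.map_sub, Polynomial.map_one,
    Polynomial.map_pow, Polynomial.map_X, map_mul, map_prod, map_sub, map_one, map_pow,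
    RatFunc.algebraMap_X, hmap] at h
  rw [← q] at h
  simp only [← qfact_mul_pow] at h
  rw [oddCatalan, div_eq_iff (by simp [qfact_ne_zero])]
  refine mul_right_cancel₀ (pow_ne_zero (2 * m + 1 + 2 * n) hq) ?_
  linear_combination -h

end
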